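/- Let S ⊆ ℝⁿ be a d-set with n−1 < d < n, let 1 < p < ∞, k ∈ ℕ, and let f ∈ L^p(ℝⁿ) be such that ℋᵈ-almost every point of S is a Lebesgue point of f. Let 𝒲_S be a Whitney decomposition of ℝⁿ ∖ S, and for each Q = Q(x_Q, r_Q) ∈ 𝒲_S fix a point a_Q ∈ S with ‖x_Q − a_Q‖_∞ = dist(x_Q, S) and set a(Q) := Q(a_Q, r_Q/2). Suppose (P_Q)_Q is a family, indexed by cubes Q in ℝⁿ, of maps sending f to polynomials of degree ≤ k−1, with constants A, C₀ > 0 such that: (near-best approximation) (⨍_Q |f − P_Q f|^p dx)^{1/p} ≤ A·ℰ_k(f,Q)_{L^p} for every cube Q; (i) if Q' ⊆ Q are cubes with |Q'| ≥ c|Q| then |P_Q f(z) − P_{Q'} f(z)| ≤ C(c,n,k) ⨍_Q |f − P_Q f| dy for every z ∈ Q'; (ii) lim_{j→∞} P_{Q(z,2^{−j})} f(z) = f̄(z) at every Lebesgue point z of f. Then there is a constant C such that for every i ∈ ℕ, (Σ_{Q ∈ 𝒲_S, ℓ(Q) = 2^{−(i+5)}} ⨍_{32a(Q) ∩ S} |f̄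 − P_{32a(Q)} f|^p dℋᵈ)^{1/p} ≤ C 2^{id/p} Σ_{j=i}^∞ (∫_S ℰ_k(f, Q(x,2^{−j}))_{L^p}^p dℋᵈ(x))^{1/p}. -/

import Mathlib

open MeasureTheory Metric Set Filter
open scoped ENNReal NNReal Topology

noncomputable section

/-- ℝⁿ, with the sup-norm (given by the product metric on `Fin n → ℝ`). -/
abbrev Rn (n : ℕ) := Fin n → ℝ

/-- `S` is an (Ahlfors) `d`-set with regularity constant `C`. -/
def IsDSet {n : ℕ} (S : Set (Rn n)) (d C : ℝ) : Prop :=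
  IsClosed S ∧ 1 < C ∧ ∀ w ∈ S, ∀ r : ℝ, 0 < r → r ≤ 1 →
    ENNReal.ofReal (C⁻¹ * r ^ d) ≤ μH[d] (closedBall w r ∩ S) ∧
      μH[d] (closedBall w r ∩ S) ≤ ENNReal.ofReal (C * r ^ d)

/-- The closed dyadic cube `2^{−j}(m + [0,1]ⁿ)`. Its sup-norm diameter is `2^{−j}`. -/
def dyadicCube {n : ℕ} (j : ℤ) (m : Fin n → ℤ) : Set (Rn n) :=
  {y | ∀ i, (m i : ℝ) * 2 ^ (-j) ≤ y i ∧ y i ≤ ((m i : ℝ) + 1) * 2 ^ (-j)}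

/-- The center of the dyadic cube `2^{−j}(m + [0,1]ⁿ)`. -/
def dyadicCenter {n : ℕ} (j : ℤ) (m : Fin n → ℤ) : Rn n :=
  fun i => ((m i : ℝ) + 1 / 2) * 2 ^ (-j)

/-- `W` is a Whitney decomposition of `ℝⁿ ∖ S` (dyadic cubes indexed by `(j,m)`). -/
def IsWhitney {n : ℕ} (S : Set (Rn n)) (W : Set (ℤ × (Fin n → ℤ))) : Prop :=
  (∀ Q ∈ W, ∀ Q' ∈ W, Q ≠ Q' →
      interior (dyadicCube Q.1 Q.2) ∩ interior (dyadicCube Q'.1 Q'.2) = ∅) ∧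
  (⋃ Q ∈ W, dyadicCube Q.1 Q.2) = Sᶜ ∧
  (∀ Q ∈ W, (∀ x ∈ dyadicCube Q.1 Q.2, (2:ℝ) ^ (-Q.1) ≤ infDist x S) ∧
      (∃ x ∈ dyadicCube Q.1 Q.2, infDist x S ≤ 4 * (2:ℝ) ^ (-Q.1)))

/-- The normalized local best approximation `ℰ_k(f, Q(x,r))_{L^u}`. -/
def localApprox {n : ℕ} (k : ℕ) (u : ℝ) (f : Rn n → ℝ) (x : Rn n) (r : ℝ) : ℝ≥0∞ :=
  ⨅ (P : MvPolynomial (Fin n) ℝ) (_ : P.totalDegree ≤ k - 1),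
    ((volume (closedBall x r))⁻¹ *
      ∫⁻ y in closedBall x r, ENNReal.ofReal |f y - MvPolynomial.eval y P| ^ u) ^ (1 / u)

/-- `x` is a Lebesgue point of `f`. -/
def LebesguePoint {n : ℕ} (f : Rn n → ℝ) (x : Rn n) : Prop :=
  Tendsto (fun ρ : ℝ => ⨍ y in closedBall x ρ, |f y - f x|) (𝓝[>] 0) (𝓝 0)

/-!
For almost every `z ∈ 32a(Q) ∩ S`, the difference `f̄(z) - P_{32a(Q)} f(z)` telescopes along
`32a(Q)`, `Q(z, 2^{-i})`, `Q(z, 2^{-i-1})`, ..., where (ii) gives convergence to `f̄(z)`.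
Consecutive cubes are nested with comparable volumes, so (i), Hölder and the near-best property
bound each step by a multiple of `ℰ_k(f, Q(z, 2^{-j}))_{L^p}`. Minkowski's inequality turns the
sum over `j` into the sum of the `L^p(S)` norms. The lower bound in the `d`-set condition makes
the normalizing factors `O(2^{id})`, and since each `a_Q` lies within a fixed multiple of `ℓ(Q)`
from the centre of `Q`, boundedly many of the cubes `32a(Q)` of one generation contain a given
point.

The error `ℰ_k(f, Q(x, r))` is an infimum over uncountably many polynomials. It is measurable in
`x` because it is upper semicontinuous: closed cubes around nearby centres lie in a slightly
larger cube.
-/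

section Lp

variable {α : Type*} [MeasurableSpace α] {μ : Measure α} {p : ℝ}

lemma lintegral_rpow_tsum_le (hp : 1 ≤ p) {E : ℕ → α → ℝ≥0∞} (hE : ∀ j, Measurable (E j)) :
    (∫⁻ x, (∑' j, E j x) ^ p ∂μ) ^ (1 / p) ≤ ∑' j, (∫⁻ x, E j x ^ p ∂μ) ^ (1 / p) := by
  have partial_le (N : ℕ) : (∫⁻ x, (∑ j ∈ Finset.range N, E j x) ^ p ∂μ) ^ (1 / p)
      ≤ ∑ j ∈ Finset.range N, (∫⁻ x, E j x ^ p ∂μ) ^ (1 / p) := by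
    simpa [eLpNorm'_eq_lintegral_enorm] using
      eLpNorm'_sum_le (s := Finset.range N) (μ := μ)
        (fun j _ => (hE j).aestronglyMeasurable) hp
  have partial_tendsto : Tendsto
      (fun N : ℕ => (∫⁻ x, (∑ j ∈ Finset.range N, E j x) ^ p ∂μ) ^ (1 / p)) atTop
      (𝓝 ((∫⁻ x, (∑' j, E j x) ^ p ∂μ) ^ (1 / p))) := by
    refine (ENNReal.continuous_rpow_const.tendsto _).comp <|
      lintegral_tendsto_of_tendsto_of_monotone (fun N => by fun_prop)
        (.of_forall fun x M N hMN => ?_)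
        (.of_forall fun x => (ENNReal.continuous_rpow_const.tendsto _).comp
          (ENNReal.tendsto_nat_tsum _))
    dsimp only
    gcongr
  exact le_of_tendsto' partial_tendsto fun N => (partial_le N).trans (ENNReal.sum_le_tsum _)

lemma laverage_le_laverage_rpow (hp : 1 ≤ p) (g : α → ℝ≥0∞) :
    ⨍⁻ x, g x ∂μ ≤ (⨍⁻ x, g x ^ p ∂μ) ^ (1 / p) := by
  rcases eq_or_ne μ 0 with rfl | hμ
  · simp
  by_cases hμ_fin : IsFiniteMeasure μ
  swap
  · simp [laverage, not_isFiniteMeasure_iff.1 hμ_fin]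
  have : NeZero μ := ⟨hμ⟩
  -- Hölder needs measurability, so it is applied to a measurable minorant with the same average.
  obtain ⟨g₀, hg₀, hg₀_le, hg₀_eq⟩ := exists_measurable_le_lintegral_eq ((μ univ)⁻¹ • μ) g
  have jensen := eLpNorm'_le_eLpNorm'_of_exponent_le one_pos hp ((μ univ)⁻¹ • μ)
    hg₀.aestronglyMeasurable
  simp only [eLpNorm'_eq_lintegral_enorm, enorm_eq_self, ENNReal.rpow_one, div_one] at jensen
  rw [laverage, laverage, hg₀_eq]
  refine jensen.trans ?_
  gcongr with x
  exact hg₀_le x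

lemma tsum_setLIntegral_le_of_encard_le {ι : Type*} [Countable ι] {B : ι → Set α}
    (hB : ∀ q, MeasurableSet (B q)) {N : ℕ∞} (hN : ∀ z, {q | z ∈ B q}.encard ≤ N)
    {g : α → ℝ≥0∞} (hg : Measurable g) :
    ∑' q, ∫⁻ z in B q, g z ∂μ ≤ N * ∫⁻ z, g z ∂μ := by
  have multiplicity (z : α) : ∑' q, (B q).indicator g z = {q | z ∈ B q}.encard * g z := by
    rw [← ENNReal.tsum_set_const, tsum_subtype {q | z ∈ B q} fun _ => g z]
    rfl
  simp_rw [← lintegral_indicator (hB _)]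
  rw [← lintegral_tsum fun q => (hg.indicator (hB q)).aemeasurable, ← lintegral_const_mul _ hg]
  refine lintegral_mono fun z => ?_
  rw [multiplicity]
  gcongr
  exact hN z

lemma rpow_tsum_average_le {ι : Type*} [Countable ι] (hp : 1 ≤ p) {B : ι → Set α}
    (hB : ∀ q, MeasurableSet (B q)) {N : ℕ∞} (hN : ∀ z, {q | z ∈ B q}.encard ≤ N)
    {M : ℝ≥0∞} (hM : ∀ q, (μ (B q))⁻¹ ≤ M) {K : ℝ≥0∞} {h : ι → α → ℝ≥0∞} {E : ℕ → α → ℝ≥0∞}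
    (hE : ∀ j, Measurable (E j)) (hh : ∀ q, ∀ᵐ z ∂μ.restrict (B q), h q z ≤ K * ∑' j, E j z) :
    (∑' q, (μ (B q))⁻¹ * ∫⁻ z in B q, h q z ^ p ∂μ) ^ (1 / p)
      ≤ (M * N) ^ (1 / p) * K * ∑' j, (∫⁻ z, E j z ^ p ∂μ) ^ (1 / p) := by
  have hp0 : 0 < p := by linarith
  have hG : Measurable fun z => (∑' j, E j z) ^ p := (Measurable.tsum hE).pow_const p
  have single (q : ι) : (μ (B q))⁻¹ * ∫⁻ z in B q, h q z ^ p ∂μ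
      ≤ M * ∫⁻ z in B q, K ^ p * (∑' j, E j z) ^ p ∂μ := by
    refine mul_le_mul' (hM q) (lintegral_mono_ae ?_)
    filter_upwards [hh q] with z hz
    rw [← ENNReal.mul_rpow_of_nonneg _ _ hp0.le]
    gcongr
  calc (∑' q, (μ (B q))⁻¹ * ∫⁻ z in B q, h q z ^ p ∂μ) ^ (1 / p)
      ≤ (M * (N * ∫⁻ z, K ^ p * (∑' j, E j z) ^ p ∂μ)) ^ (1 / p) := by
        gcongr
        refine (ENNReal.tsum_le_tsum single).trans ?_
        rw [ENNReal.tsum_mul_left]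
        gcongr
        exact tsum_setLIntegral_le_of_encard_le hB hN (hG.const_mul _)
    _ = (M * N) ^ (1 / p) * K * (∫⁻ z, (∑' j, E j z) ^ p ∂μ) ^ (1 / p) := by
        have hq : 0 ≤ 1 / p := by positivity
        rw [lintegral_const_mul _ hG, ← mul_assoc, ← mul_assoc, ENNReal.mul_rpow_of_nonneg _ _ hq,
          ENNReal.mul_rpow_of_nonneg _ (K ^ p) hq, ← ENNReal.rpow_mul,
          mul_one_div_cancel hp0.ne', ENNReal.rpow_one]
    _ ≤ _ := by
        gcongr
        exact lintegral_rpow_tsum_le hp hE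

lemma setLIntegral_rpow_abs_sub_lt_top [TopologicalSpace α] [T2Space α] [OpensMeasurableSpace α]
    [IsFiniteMeasureOnCompacts μ] (hp : 1 ≤ p) {K : Set α} (hK : IsCompact K) {f g : α → ℝ}
    (hf : ∫⁻ x in K, ENNReal.ofReal |f x| ^ p ∂μ < ⊤) (hg : ContinuousOn g K) :
    ∫⁻ x in K, ENNReal.ofReal |f x - g x| ^ p ∂μ < ⊤ := by
  obtain ⟨M, hM⟩ := hK.exists_bound_of_continuousOn hg
  have hp0 : 0 ≤ p := by linarith
  have pointwise (x) (hx : x ∈ K) : ENNReal.ofReal |f x - g x| ^ p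
      ≤ 2 ^ (p - 1) * (ENNReal.ofReal |f x| ^ p + ENNReal.ofReal M ^ p) := by
    refine le_trans ?_ (ENNReal.rpow_add_le_mul_rpow_add_rpow _ _ hp)
    gcongr
    rw [← ENNReal.ofReal_add (abs_nonneg _) ((norm_nonneg _).trans (hM x hx))]
    gcongr
    exact (abs_sub _ _).trans (by gcongr; exact hM x hx)
  calc ∫⁻ x in K, ENNReal.ofReal |f x - g x| ^ p ∂μ
      ≤ ∫⁻ x in K, 2 ^ (p - 1) * (ENNReal.ofReal |f x| ^ p + ENNReal.ofReal M ^ p) ∂μ :=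
        setLIntegral_mono' hK.measurableSet pointwise
    _ = 2 ^ (p - 1) * ((∫⁻ x in K, ENNReal.ofReal |f x| ^ p ∂μ) + ENNReal.ofReal M ^ p * μ K) := by
        rw [lintegral_const_mul' _ _ (by finiteness), lintegral_add_right _ measurable_const,
          setLIntegral_const]
    _ < ⊤ := by
        have := hK.measure_lt_top (μ := μ)
        finiteness

end Lp

section LocalApprox

lemma upperSemicontinuous_measure_closedBall {X : Type*} [PseudoMetricSpace X]
    [MeasurableSpace X] [OpensMeasurableSpace X] {ν : Measure X}
    (hν : ∀ x R, ν (closedBall x R) < ⊤) (r : ℝ) :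
    UpperSemicontinuous fun x => ν (closedBall x r) := by
  intro x b hb
  have shrink : Tendsto (fun R => ν (closedBall x R)) (𝓝[>] r) (𝓝 (ν (closedBall x r))) := by
    rw [← biInter_gt_closedBall x r]
    exact tendsto_measure_biInter_gt (fun R _ => measurableSet_closedBall.nullMeasurableSet)
      (fun _ _ _ hRR' => closedBall_subset_closedBall hRR') ⟨r + 1, by simp, (hν _ _).ne⟩
  obtain ⟨R, hRb, hrR⟩ :=
    ((shrink.eventually_lt_const hb).and self_mem_nhdsWithin).exists
  filter_upwards [ball_mem_nhds x (sub_pos.2 hrR)] with y hy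
  exact (measure_mono (closedBall_subset_closedBall' (by linarith [mem_ball.1 hy]))).trans_lt hRb

lemma upperSemicontinuous_localApprox {n k : ℕ} {u : ℝ} (hu : 1 ≤ u) {f : Rn n → ℝ}
    (hf : ∀ x r, ∫⁻ y in closedBall x r, ENNReal.ofReal |f y| ^ u < ⊤) {r : ℝ} (hr : 0 < r) :
    UpperSemicontinuous fun x => localApprox k u f x r := by
  refine upperSemicontinuous_biInf fun P _ => ?_
  have usc := upperSemicontinuous_measure_closedBall
    (ν := volume.withDensity fun y => ENNReal.ofReal |f y - MvPolynomial.eval y P| ^ u)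
    (fun x R => by
      rw [withDensity_apply _ measurableSet_closedBall]
      exact setLIntegral_rpow_abs_sub_lt_top hu (isCompact_closedBall x R) (hf x R)
        (MvPolynomial.continuous_eval P).continuousOn) r
  simp only [withDensity_apply _ measurableSet_closedBall,
    Real.volume_pi_closedBall _ hr.le] at usc ⊢
  have hcont : Continuous fun t : ℝ≥0∞ =>
      ((ENNReal.ofReal ((2 * r) ^ Fintype.card (Fin n)))⁻¹ * t) ^ (1 / u) := by
    refine ENNReal.continuous_rpow_const.comp (ENNReal.continuous_const_mul ?_)
    exact ENNReal.inv_ne_top.2 (ENNReal.ofReal_pos.2 (by positivity)).ne'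
  refine hcont.comp_upperSemicontinuous usc fun s t hst => ?_
  dsimp only
  gcongr

end LocalApprox

section Telescoping

/-- Changes of scale are controlled by `E`: passing from the function `T z r` attached to the ball
`Q(z, r)` to the one attached to a subball of comparable radius containing `z` moves the value at
the centre `z` by at most `E z r`. The factor `4` is the ratio of the radii of `Q(z, 2^{-i})` and
of a cube `32a(Q)` with `ℓ(Q) = 2^{-(i+5)}`. -/
def ShrinkingBound {X Y : Type*} [PseudoMetricSpace X] [PseudoEMetricSpace Y]
    (T : X → ℝ → X → Y) (E : X → ℝ → ℝ≥0∞) : Prop :=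
  ∀ ⦃z a : X⦄ ⦃r s : ℝ⦄, 0 < r → r ≤ 4 * s → closedBall a s ⊆ closedBall z r →
    z ∈ closedBall a s → edist (T z r z) (T a s z) ≤ E z r

lemma ShrinkingBound.edist_le_two_mul_tsum {X Y : Type*} [PseudoMetricSpace X]
    [PseudoEMetricSpace Y] {T : X → ℝ → X → Y} {E : X → ℝ → ℝ≥0∞} (h : ShrinkingBound T E)
    {z a : X} {i : ℕ} (hza : z ∈ closedBall a (2 ^ (-(i : ℤ)) / 4)) {y : Y}
    (hlim : Tendsto (fun j : ℕ => T z (2 ^ (-(j : ℤ))) z) atTop (𝓝 y)) :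
    edist y (T a (2 ^ (-(i : ℤ)) / 4) z) ≤ 2 * ∑' j : ℕ, E z (2 ^ (-(i : ℤ) - (j : ℤ))) := by
  have hρ : (0 : ℝ) < 2 ^ (-(i : ℤ)) := by positivity
  have halve (j : ℕ) :
      edist (T z (2 ^ (-(i : ℤ) - (j : ℤ))) z) (T z (2 ^ (-(i : ℤ) - ((j + 1 : ℕ) : ℤ))) z)
        ≤ E z (2 ^ (-(i : ℤ) - (j : ℤ))) := by
    have hr : (0 : ℝ) < 2 ^ (-(i : ℤ) - (j : ℤ)) := by positivity
    rw [Nat.cast_succ, ← sub_sub, zpow_sub_one₀ two_ne_zero, ← div_eq_mul_inv]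
    exact h hr (by linarith) (closedBall_subset_closedBall (by linarith))
      (mem_closedBall_self (by linarith))
  have hlim_tail : Tendsto (fun j : ℕ => T z (2 ^ (-(i : ℤ) - (j : ℤ))) z) atTop (𝓝 y) := by
    refine (hlim.comp (tendsto_add_atTop_nat i)).congr fun j => ?_
    rw [Function.comp_apply, Nat.cast_add, neg_add', neg_sub_comm]
  have telescope := edist_le_tsum_of_edist_le_of_tendsto₀ _ halve hlim_tail
  rw [Nat.cast_zero, sub_zero, edist_comm] at telescope
  have recenter : edist (T z (2 ^ (-(i : ℤ))) z) (T a (2 ^ (-(i : ℤ)) / 4) z)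
      ≤ ∑' j : ℕ, E z (2 ^ (-(i : ℤ) - (j : ℤ))) := by
    have hsub : closedBall a (2 ^ (-(i : ℤ)) / 4) ⊆ closedBall z (2 ^ (-(i : ℤ))) :=
      closedBall_subset_closedBall' (by linarith [mem_closedBall'.1 hza])
    refine (h hρ (by linarith) hsub hza).trans ?_
    simpa using ENNReal.le_tsum (f := fun j : ℕ => E z (2 ^ (-(i : ℤ) - (j : ℤ)))) 0
  rw [two_mul]
  exact (edist_triangle _ _ _).trans (add_le_add telescope recenter)

lemma ofReal_pow_mul_addHaar_closedBall_le {E : Type*} [NormedAddCommGroup E] [NormedSpace ℝ E]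
    [FiniteDimensional ℝ E] [MeasurableSpace E] [BorelSpace E] (μ : Measure E)
    [μ.IsAddHaarMeasure] (x y : E) {c r s : ℝ} (hc : 0 ≤ c) (hr : 0 ≤ r) (hcrs : c * r ≤ s) :
    ENNReal.ofReal (c ^ Module.finrank ℝ E) * μ (closedBall x r) ≤ μ (closedBall y s) := by
  rw [Measure.addHaar_closedBall μ x hr,
    Measure.addHaar_closedBall μ y ((mul_nonneg hc hr).trans hcrs), ← mul_assoc,
    ← ENNReal.ofReal_mul (by positivity), ← mul_pow]
  gcongr

lemma ShrinkingBound.of_near_best {n k : ℕ} {p : ℝ} (hp : 1 ≤ p) {f : Rn n → ℝ}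
    {T : Rn n → ℝ → Rn n → ℝ} {A C₁ : ℝ} (hC₁ : 0 ≤ C₁)
    (hnear : ∀ (x : Rn n) (r : ℝ), 0 < r →
      ((volume (closedBall x r))⁻¹ * ∫⁻ y in closedBall x r,
          ENNReal.ofReal |f y - T x r y| ^ p) ^ (1 / p)
        ≤ ENNReal.ofReal A * localApprox k p f x r)
    (hcomp : ∀ (x x' : Rn n) (r r' : ℝ), 0 < r' → closedBall x' r' ⊆ closedBall x r →
      ENNReal.ofReal ((1 / 4) ^ n) * volume (closedBall x r) ≤ volume (closedBall x' r') →
      ∀ z ∈ closedBall x' r', ENNReal.ofReal |T x r z - T x' r' z|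
        ≤ ENNReal.ofReal C₁ * ((volume (closedBall x r))⁻¹ *
            ∫⁻ y in closedBall x r, ENNReal.ofReal |f y - T x r y|)) :
    ShrinkingBound T fun z r => ENNReal.ofReal (C₁ * A) * localApprox k p f z r := by
  intro z a r s hr hrs hsub hz
  have volume_le : ENNReal.ofReal ((1 / 4) ^ n) * volume (closedBall z r)
      ≤ volume (closedBall a s) := by
    simpa using ofReal_pow_mul_addHaar_closedBall_le volume z a (c := 1 / 4) (by norm_num) hr.le
      (by linarith)
  have jensen := laverage_le_laverage_rpow (μ := volume.restrict (closedBall z r)) hp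
    fun y => ENNReal.ofReal |f y - T z r y|
  simp only [setLAverage_eq, ENNReal.div_eq_inv_mul] at jensen
  simp only [edist_dist, Real.dist_eq, ENNReal.ofReal_mul hC₁, mul_assoc]
  exact (hcomp z a r s (by linarith) hsub volume_le z hz).trans
    (mul_le_mul_right (jensen.trans (hnear z r hr)) _)

end Telescoping

section DyadicCubes

lemma encard_setOf_forall_abs_sub_le {ι : Type*} [Fintype ι] (t : ι → ℝ) (B : ℝ) :
    {m : ι → ℤ | ∀ l, |(m l : ℝ) - t l| ≤ B}.encard ≤ ((⌊2 * B⌋₊ + 1) ^ Fintype.card ι : ℕ) := by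
  classical
  have subset_box : {m : ι → ℤ | ∀ l, |(m l : ℝ) - t l| ≤ B}
      ⊆ Fintype.piFinset fun l => Finset.Icc ⌈t l - B⌉ ⌊t l + B⌋ := by
    intro m hm
    simp only [Finset.mem_coe, Fintype.mem_piFinset, Finset.mem_Icc, Int.ceil_le, Int.le_floor]
    intro l
    constructor <;> linarith [abs_le.1 (hm l)]
  have card_side (l : ι) : (Finset.Icc ⌈t l - B⌉ ⌊t l + B⌋).card ≤ ⌊2 * B⌋₊ + 1 := by
    have : ⌊t l + B⌋ - ⌈t l - B⌉ ≤ ⌊2 * B⌋ := by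
      rw [Int.le_floor]
      push_cast
      linarith [Int.floor_le (t l + B), Int.le_ceil (t l - B)]
    have := Int.self_le_toNat ⌊2 * B⌋
    rw [Int.floor_toNat] at this
    rw [Int.card_Icc]
    omega
  refine (encard_le_encard subset_box).trans ?_
  rw [encard_coe_eq_coe_finsetCard, Fintype.card_piFinset, Nat.cast_le]
  exact Finset.prod_le_pow_card _ _ _ fun l _ => card_side l

variable {n : ℕ}

lemma encard_setOf_dist_dyadicCenter_le (j : ℤ) (z : Rn n) (B : ℝ) :
    {m : Fin n → ℤ | dist (dyadicCenter j m) z ≤ B * 2 ^ (-j)}.encard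
      ≤ ((⌊2 * B⌋₊ + 1) ^ n : ℕ) := by
  have hside : (0 : ℝ) < 2 ^ (-j) := by positivity
  have box_card := encard_setOf_forall_abs_sub_le (fun l => z l / 2 ^ (-j) - 1 / 2) B
  rw [Fintype.card_fin] at box_card
  refine (encard_le_encard fun m hm l => ?_).trans box_card
  have hl : |((m l : ℝ) + 1 / 2) * 2 ^ (-j) - z l| ≤ B * 2 ^ (-j) :=
    (dist_le_pi_dist (dyadicCenter j m) z l).trans hm
  refine le_of_mul_le_mul_right ?_ hside
  have rescale : ((m l : ℝ) - (z l / 2 ^ (-j) - 1 / 2)) * 2 ^ (-j)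
      = ((m l : ℝ) + 1 / 2) * 2 ^ (-j) - z l := by
    rw [sub_mul, sub_mul, div_mul_cancel₀ _ hside.ne']
    ring
  rwa [← abs_of_pos hside, ← abs_mul, abs_of_pos hside, rescale]

lemma dist_dyadicCenter_le {j : ℤ} {m : Fin n → ℤ} {x : Rn n} (hx : x ∈ dyadicCube j m) :
    dist (dyadicCenter j m) x ≤ 2 ^ (-j) / 2 := by
  refine (dist_pi_le_iff (by positivity)).2 fun l => ?_
  rw [Real.dist_eq, dyadicCenter, abs_le]
  constructor <;> linarith [hx l]

lemma IsWhitney.infDist_dyadicCenter_le {S : Set (Rn n)} {W : Set (ℤ × (Fin n → ℤ))}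
    (hW : IsWhitney S W) {Q : ℤ × (Fin n → ℤ)} (hQ : Q ∈ W) :
    infDist (dyadicCenter Q.1 Q.2) S ≤ 9 / 2 * 2 ^ (-Q.1) := by
  obtain ⟨x, hx, hxS⟩ := (hW.2.2 Q hQ).2
  linarith [dist_dyadicCenter_le hx,
    infDist_le_infDist_add_dist (s := S) (x := dyadicCenter Q.1 Q.2) (y := x)]

lemma encard_setOf_mem_closedBall_le {W : Set (ℤ × (Fin n → ℤ))} {a : ℤ × (Fin n → ℤ) → Rn n}
    {B : ℝ} (ha : ∀ Q ∈ W, dist (dyadicCenter Q.1 Q.2) (a Q) ≤ B * 2 ^ (-Q.1))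
    (j : ℤ) (R : ℝ) (z : Rn n) :
    {Q : {Q : ℤ × (Fin n → ℤ) // Q ∈ W ∧ Q.1 = j} | z ∈ closedBall (a Q) (R * 2 ^ (-j))}.encard
      ≤ ((⌊2 * (B + R)⌋₊ + 1) ^ n : ℕ) := by
  have index_injective : Function.Injective
      fun Q : {Q : ℤ × (Fin n → ℤ) // Q ∈ W ∧ Q.1 = j} => Q.1.2 := fun Q Q' h =>
    Subtype.ext (Prod.ext (Q.2.2.trans Q'.2.2.symm) h)
  rw [← index_injective.encard_image]
  refine (encard_le_encard ?_).trans (encard_setOf_dist_dyadicCenter_le j z (B + R))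
  rintro _ ⟨⟨⟨_, m⟩, hQ, rfl⟩, hz, rfl⟩
  rw [mem_ofPred_eq, add_mul]
  exact (dist_triangle _ _ z).trans (add_le_add (ha _ hQ) (mem_closedBall'.1 hz))

end DyadicCubes

lemma inv_ofReal_mul_two_zpow_div_rpow {c : ℝ} (hc : 0 < c) (d : ℝ) (i : ℕ) :
    (ENNReal.ofReal (c * (2 ^ (-(i : ℤ)) / 4) ^ d))⁻¹
      = ENNReal.ofReal (c⁻¹ * 4 ^ d) * 2 ^ ((i : ℝ) * d) := by
  have two_rpow : (2 : ℝ≥0∞) ^ ((i : ℝ) * d) = ENNReal.ofReal (2 ^ ((i : ℝ) * d)) := by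
    simp [← ENNReal.ofReal_rpow_of_pos]
  rw [two_rpow, ← ENNReal.ofReal_inv_of_pos (by positivity), ← ENNReal.ofReal_mul (by positivity),
    Real.div_rpow (by positivity) (by norm_num), zpow_neg, zpow_natCast,
    Real.inv_rpow (by positivity), Real.rpow_mul (by norm_num), Real.rpow_natCast]
  congr 1
  field_simp

lemma rpow_ofReal_mul_rpow_mul_natCast {a b p : ℝ} (ha : 0 ≤ a) (hp : 0 ≤ p) (s : ℝ) (N : ℕ) :
    (ENNReal.ofReal a * 2 ^ s * N) ^ (1 / p) * (2 * ENNReal.ofReal b)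
      = ENNReal.ofReal ((a * N) ^ (1 / p) * (2 * b)) * 2 ^ (s / p) := by
  have hq : 0 ≤ 1 / p := by positivity
  rw [ENNReal.ofReal_mul (by positivity), ← ENNReal.ofReal_rpow_of_nonneg (by positivity) hq,
    ENNReal.ofReal_mul ha, ENNReal.ofReal_natCast, ENNReal.ofReal_mul zero_le_two,
    ENNReal.ofReal_ofNat, ENNReal.mul_rpow_of_nonneg _ _ hq, ENNReal.mul_rpow_of_nonneg _ _ hq,
    ENNReal.mul_rpow_of_nonneg _ _ hq, ← ENNReal.rpow_mul, mul_one_div]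
  ring

theorem boundary_average_estimate_general {n : ℕ} (μ : Measure (Rn n)) (d c : ℝ) (hc : 0 < c)
    (p : ℝ) (hp : 1 ≤ p) (k : ℕ) (f : Rn n → ℝ)
    (hf : ∀ x r, ∫⁻ y in closedBall x r, ENNReal.ofReal |f y| ^ p < ⊤)
    (W : Set (ℤ × (Fin n → ℤ))) (a : ℤ × (Fin n → ℤ) → Rn n)
    (hμ : ∀ Q ∈ W, ∀ r : ℝ, 0 < r → r ≤ 1 → ENNReal.ofReal (c * r ^ d) ≤ μ (closedBall (a Q) r))
    (B : ℝ) (ha : ∀ Q ∈ W, dist (dyadicCenter Q.1 Q.2) (a Q) ≤ B * 2 ^ (-Q.1))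
    (T : Rn n → ℝ → Rn n → ℝ) (A : ℝ) (hA : 0 < A)
    (hnear : ∀ (x : Rn n) (r : ℝ), 0 < r →
      ((volume (closedBall x r))⁻¹ * ∫⁻ y in closedBall x r,
          ENNReal.ofReal |f y - T x r y| ^ p) ^ (1 / p)
        ≤ ENNReal.ofReal A * localApprox k p f x r)
    (hcomp : ∀ ε : ℝ, 0 < ε → ∃ C₁ > (0 : ℝ), ∀ (x x' : Rn n) (r r' : ℝ), 0 < r' →
      closedBall x' r' ⊆ closedBall x r →
      ENNReal.ofReal ε * volume (closedBall x r) ≤ volume (closedBall x' r') →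
      ∀ z ∈ closedBall x' r', ENNReal.ofReal |T x r z - T x' r' z|
        ≤ ENNReal.ofReal C₁ * ((volume (closedBall x r))⁻¹ *
            ∫⁻ y in closedBall x r, ENNReal.ofReal |f y - T x r y|))
    (hconv : ∀ᵐ z ∂μ, Tendsto (fun j : ℕ => T z ((2 : ℝ) ^ (-(j : ℤ))) z) atTop (𝓝 (f z))) :
    ∃ C > 0, ∀ i : ℕ,
      (∑' Q : {Q : ℤ × (Fin n → ℤ) // Q ∈ W ∧ Q.1 = (i : ℤ) + 5},
          (μ (closedBall (a Q.1) (8 * (2 : ℝ) ^ (-(i : ℤ) - 5))))⁻¹ *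
            ∫⁻ z in closedBall (a Q.1) (8 * (2 : ℝ) ^ (-(i : ℤ) - 5)),
              ENNReal.ofReal |f z - T (a Q.1) (8 * (2 : ℝ) ^ (-(i : ℤ) - 5)) z| ^ p ∂μ) ^ (1 / p)
        ≤ ENNReal.ofReal C * (2 : ℝ≥0∞) ^ ((i : ℝ) * d / p) *
            ∑' j : ℕ, (∫⁻ x,
              localApprox k p f x ((2 : ℝ) ^ (-(i : ℤ) - (j : ℤ))) ^ p ∂μ) ^ (1 / p) := by
  obtain ⟨C₁, hC₁, hC₁_comp⟩ := hcomp ((1 / 4) ^ n) (by positivity)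
  have shrinking := ShrinkingBound.of_near_best hp hC₁.le hnear hC₁_comp
  set N : ℕ := (⌊2 * (B + 8)⌋₊ + 1) ^ n with hN
  refine ⟨(c⁻¹ * 4 ^ d * N) ^ (1 / p) * (2 * (C₁ * A)), by positivity, fun i => ?_⟩
  have radius_eq : 8 * (2 : ℝ) ^ (-(i : ℤ) - 5) = 2 ^ (-(i : ℤ)) / 4 := by
    rw [zpow_sub₀ two_ne_zero, show (2 : ℝ) ^ (5 : ℤ) = 32 by norm_num]
    ring
  have radius_le_one : (2 : ℝ) ^ (-(i : ℤ)) / 4 ≤ 1 := by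
    linarith [zpow_le_one_of_nonpos₀ (one_le_two (α := ℝ)) (neg_nonpos.2 (Int.natCast_nonneg i))]
  have overlap (z : Rn n) := encard_setOf_mem_closedBall_le ha (i + 5) 8 z
  rw [neg_add', radius_eq, ← hN] at overlap
  have inv_measure_le (Q : {Q : ℤ × (Fin n → ℤ) // Q ∈ W ∧ Q.1 = (i : ℤ) + 5}) :=
    (ENNReal.inv_le_inv.2 (hμ Q Q.2.1 _ (by positivity) radius_le_one)).trans_eq
      (inv_ofReal_mul_two_zpow_div_rpow hc d i)
  have pointwise (Q : {Q : ℤ × (Fin n → ℤ) // Q ∈ W ∧ Q.1 = (i : ℤ) + 5}) :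
      ∀ᵐ z ∂μ.restrict (closedBall (a Q) (2 ^ (-(i : ℤ)) / 4)),
        ENNReal.ofReal |f z - T (a Q) (2 ^ (-(i : ℤ)) / 4) z| ≤ 2 * ENNReal.ofReal (C₁ * A) *
          ∑' j : ℕ, localApprox k p f z (2 ^ (-(i : ℤ) - (j : ℤ))) := by
    filter_upwards [ae_restrict_of_ae hconv, ae_restrict_mem measurableSet_closedBall] with z hz hzQ
    have := shrinking.edist_le_two_mul_tsum hzQ hz
    rwa [edist_dist, Real.dist_eq, ENNReal.tsum_mul_left, ← mul_assoc] at this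
  have estimate := rpow_tsum_average_le hp (fun _ => measurableSet_closedBall) overlap
    inv_measure_le (fun j => (upperSemicontinuous_localApprox hp hf (by positivity)).measurable)
    pointwise
  rwa [ENat.toENNReal_coe, rpow_ofReal_mul_rpow_mul_natCast (by positivity) (by positivity),
    ← radius_eq] at estimate

/-- **Estimate of boundary averages by local approximations** (Lemma 3.11).
Here `P` is a family of near-best polynomial projections indexed by cubes `Q(x,r)`
(i.e. `P x r` is the polynomial assigned to `Q(x,r)`), satisfying the near-best
approximation property with constant `A`, the comparison property (i) and the
convergence property (ii); `aQ Q ∈ S` realizes the sup-norm distance from the center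
of the Whitney cube `Q` to `S`, and `a(Q) = Q(a_Q, r_Q/2)`, so that for `Q ∈ 𝒲_S`
with side `2^{−(i+5)}` the cube `32a(Q)` is `Q(a_Q, 8·2^{−(i+5)})`. -/
theorem boundary_average_estimate {n : ℕ} (hn : 2 ≤ n) (S : Set (Rn n)) (d C₀ : ℝ)
    (hS : IsDSet S d C₀) (hd1 : (n : ℝ) - 1 < d) (hd2 : d < n)
    (p : ℝ) (hp : 1 < p) (k : ℕ)
    (f : Rn n → ℝ) (hmf : Measurable f)
    (hfLp : (∫⁻ x, ENNReal.ofReal |f x| ^ p) < ⊤)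
    (hLeb : ∀ᵐ x ∂(μH[d]).restrict S, LebesguePoint f x)
    (W : Set (ℤ × (Fin n → ℤ))) (hW : IsWhitney S W)
    (aQ : ℤ × (Fin n → ℤ) → Rn n)
    (haQ : ∀ Q ∈ W, aQ Q ∈ S ∧
      dist (dyadicCenter Q.1 Q.2) (aQ Q) = infDist (dyadicCenter Q.1 Q.2) S)
    (P : Rn n → ℝ → MvPolynomial (Fin n) ℝ)
    (hdeg : ∀ x r, (P x r).totalDegree ≤ k - 1)
    (A : ℝ) (hA : 0 < A)
    (hnear : ∀ (x : Rn n) (r : ℝ), 0 < r →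
      ((volume (closedBall x r))⁻¹ * ∫⁻ y in closedBall x r,
          ENNReal.ofReal |f y - MvPolynomial.eval y (P x r)| ^ p) ^ (1/p)
        ≤ ENNReal.ofReal A * localApprox k p f x r)
    (hcomp : ∀ c : ℝ, 0 < c → ∃ C₁ > (0:ℝ), ∀ (x x' : Rn n) (r r' : ℝ), 0 < r' →
      closedBall x' r' ⊆ closedBall x r →
      ENNReal.ofReal c * volume (closedBall x r) ≤ volume (closedBall x' r') →
      ∀ z ∈ closedBall x' r',
        ENNReal.ofReal |MvPolynomial.eval z (P x r) - MvPolynomial.eval z (P x' r')|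
          ≤ ENNReal.ofReal C₁ * ((volume (closedBall x r))⁻¹ *
              ∫⁻ y in closedBall x r, ENNReal.ofReal |f y - MvPolynomial.eval y (P x r)|))
    (hconv : ∀ z : Rn n, LebesguePoint f z →
      Tendsto (fun j : ℕ => MvPolynomial.eval z (P z ((2:ℝ) ^ (-(j:ℤ))))) atTop (𝓝 (f z))) :
    ∃ C > 0, ∀ i : ℕ,
      (∑' Q : {Q : ℤ × (Fin n → ℤ) // Q ∈ W ∧ Q.1 = (i:ℤ) + 5},
          (μH[d] (closedBall (aQ Q.1) (8 * (2:ℝ) ^ (-(i:ℤ) - 5)) ∩ S))⁻¹ *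
            ∫⁻ z in closedBall (aQ Q.1) (8 * (2:ℝ) ^ (-(i:ℤ) - 5)) ∩ S,
              ENNReal.ofReal
                |f z - MvPolynomial.eval z (P (aQ Q.1) (8 * (2:ℝ) ^ (-(i:ℤ) - 5)))| ^ p
              ∂μH[d]) ^ (1/p)
        ≤ ENNReal.ofReal C * (2:ℝ≥0∞) ^ ((i : ℝ) * d / p) *
            ∑' j : ℕ, (∫⁻ x in S,
                localApprox k p f x ((2:ℝ) ^ (-(i:ℤ) - (j:ℤ))) ^ p ∂μH[d]) ^ (1/p) := by
  obtain ⟨-, hC₀, hdset⟩ := hS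
  have estimate := boundary_average_estimate_general ((μH[d]).restrict S) d C₀⁻¹ (by positivity) p
    hp.le k f (fun x r => (setLIntegral_le_lintegral _ _).trans_lt hfLp) W aQ
    (fun Q hQ r hr hr1 => by
      simpa only [Measure.restrict_apply measurableSet_closedBall] using
        (hdset _ (haQ Q hQ).1 r hr hr1).1) (9 / 2)
    (fun Q hQ => (haQ Q hQ).2.trans_le (hW.infDist_dyadicCenter_le hQ))
    (fun x r y => MvPolynomial.eval y (P x r)) A hA hnear hcomp (hLeb.mono hconv)
  simpa only [Measure.restrict_apply measurableSet_closedBall,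
    Measure.restrict_restrict measurableSet_closedBall] using estimate
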